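/- arXiv:1312.7241 — 2 statements merged into one kernel-verified Lean document; each statement's English description precedes it below -/
import Mathlib

section
/- If (T, f) solves the Duffing boundary value problem for (m, β), then ∫_{-T}^{T} f(t)³ dt = 2√2 · β · arcsin(k) + 2m, where k = √((1 + β/√(2m² + β²))/2). -/
/-!
The energy identity says that `(f² - β, √2 f')` moves on the circle of radius
`S = √(2m² + β²)`, and the equation says that it rotates clockwise with angular speed `√2 f`.
Writing `G(t) = √2 ∫_{-T}^t f` and `ψ = 2 arcsin k`, which satisfies `S cos ψ = -β` and
`S sin ψ = √2 m` (`duffing_angle`), one therefore has `f² - β = S cos (ψ - G)` on `[-T, T]`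
(`duffing_rotation`). Since `f` vanishes at `T` but nowhere inside, `G` cannot pass `2ψ` before
time `T`, which forces `G(T) = 2ψ`, i.e. `∫ f = 2√2 arcsin k` (`duffing_integral_f`). Integrating
`f³ = β f - f''` gives the formula.
-/

open Real

/-- The Duffing boundary value problem for `(m, β)`: a time `T > 0` and a `C^∞` function
`f` with `f'' = -f³ + β·f` on `[-T, T]`, boundary values `f(±T) = 0`,
`f'(-T) = m`, `f'(T) = -m`, and `f > 0` on `(-T, T)`. -/
def IsDuffingSolution (m : ℕ) (β T : ℝ) (f : ℝ → ℝ) : Prop :=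
  0 < T ∧ ContDiff ℝ (⊤ : ℕ∞) f ∧
    (∀ t ∈ Set.Icc (-T) T, deriv (deriv f) t = -(f t) ^ 3 + β * f t) ∧
    f (-T) = 0 ∧ f T = 0 ∧ deriv f (-T) = (m : ℝ) ∧ deriv f T = -(m : ℝ) ∧
    (∀ t ∈ Set.Ioo (-T) T, 0 < f t)


/-- The elliptic modulus `k = √((1 + β/√(2m² + β²))/2)` associated to `(m, β)`. -/
noncomputable def duffingModulus (m : ℕ) (β : ℝ) : ℝ :=
  Real.sqrt ((1 + β / Real.sqrt (2 * (m : ℝ) ^ 2 + β ^ 2)) / 2)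

/-- The phase `2 arcsin k` is the polar angle of the point `(-β, √2 m)`, of modulus `S`. -/
lemma duffing_angle (m : ℕ) (hm : 0 < m) (β : ℝ) :
    0 < 2 * arcsin (duffingModulus m β) ∧ 2 * arcsin (duffingModulus m β) ≤ π ∧
    √(2 * (m : ℝ) ^ 2 + β ^ 2) * cos (2 * arcsin (duffingModulus m β)) = -β ∧
    √(2 * (m : ℝ) ^ 2 + β ^ 2) * sin (2 * arcsin (duffingModulus m β)) = √2 * m := by
  have hm' : (0 : ℝ) < m := by exact_mod_cast hm
  have hpos : 0 < 2 * (m : ℝ) ^ 2 + β ^ 2 := by positivity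
  unfold duffingModulus
  set S := √(2 * (m : ℝ) ^ 2 + β ^ 2) with hS
  have hS0 : 0 < S := Real.sqrt_pos.2 hpos
  have hS2 : S ^ 2 = 2 * (m : ℝ) ^ 2 + β ^ 2 := Real.sq_sqrt hpos.le
  have hb : |β| < S := abs_lt_of_sq_lt_sq (by nlinarith) hS0.le
  obtain ⟨hb1, hb2⟩ := abs_lt.1 hb
  have h1 : -1 < β / S := by rw [lt_div_iff₀ hS0]; linarith
  have h2 : β / S < 1 := by rw [div_lt_iff₀ hS0]; linarith
  set k := √((1 + β / S) / 2) with hk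
  have hk0 : 0 < k := Real.sqrt_pos.2 (by linarith)
  have hk2 : k ^ 2 = (1 + β / S) / 2 := Real.sq_sqrt (by linarith)
  have hk1 : k ≤ 1 := by nlinarith
  have ha0 : 0 < arcsin k := Real.arcsin_pos.2 hk0
  have ha1 : arcsin k ≤ π / 2 := Real.arcsin_le_pi_div_two k
  have hcos : S * cos (2 * arcsin k) = -β := by
    rw [Real.cos_two_mul, Real.cos_sq', Real.sin_arcsin (by linarith) hk1, hk2]
    field_simp
    ring
  refine ⟨by linarith, by linarith, hcos, ?_⟩
  have hs : 0 ≤ sin (2 * arcsin k) := Real.sin_nonneg_of_nonneg_of_le_pi (by linarith) (by linarith)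
  rw [← sq_eq_sq₀ (by positivity) (by positivity), mul_pow, mul_pow, Real.sin_sq,
    Real.sq_sqrt (by norm_num : (0 : ℝ) ≤ 2)]
  have : S ^ 2 * cos (2 * arcsin k) ^ 2 = β ^ 2 := by rw [← mul_pow, hcos]; ring
  linarith

/-- The rotation of `(f² - β, √2 f')` by the accumulated angle `√2 ∫ f`, first coordinate. -/
lemma duffing_rotation (m : ℕ) (β T : ℝ) (f : ℝ → ℝ) (h : IsDuffingSolution m β T f)
    (t : ℝ) (ht : t ∈ Set.Icc (-T) T) :
    f t ^ 2 - β = -β * cos (√2 * ∫ s in (-T)..t, f s)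
      + √2 * m * sin (√2 * ∫ s in (-T)..t, f s) := by
  obtain ⟨hT, hf, hode, hf0, -, hf'0, -, -⟩ := h
  have hfc : Continuous f := hf.continuous
  have hd1 : ∀ x, HasDerivAt f (deriv f x) x := fun x =>
    ((hf.differentiable (by simp)) x).hasDerivAt
  have hf' : ContDiff ℝ 1 (deriv f) :=
    ContDiff.deriv' (n := 1) (by simpa [one_add_one_eq_two] using contDiff_infty.1 hf 2)
  have hd2 : ∀ x, HasDerivAt (deriv f) (deriv (deriv f) x) x := fun x =>
    ((hf'.differentiable (by simp)) x).hasDerivAt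
  set G : ℝ → ℝ := fun t => √2 * ∫ s in (-T)..t, f s with hG
  have hdG : ∀ x, HasDerivAt G (√2 * f x) x := fun x =>
    (intervalIntegral.integral_hasDerivAt_right (hfc.intervalIntegrable _ _)
      hfc.stronglyMeasurable.stronglyMeasurableAtFilter hfc.continuousAt).const_mul _
  have hG0 : G (-T) = 0 := by simp [hG]
  have h22 : √2 * √2 = (2 : ℝ) := Real.mul_self_sqrt (by norm_num)
  -- Undoing the rotation gives two conserved quantities.
  have hA : ∀ x ∈ Set.Icc (-T) T,
      (f x ^ 2 - β) * cos (G x) - √2 * deriv f x * sin (G x) = -β := by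
    have hd : ∀ x, HasDerivAt
        (fun x => (f x ^ 2 - β) * cos (G x) - √2 * deriv f x * sin (G x)) _ x := fun x =>
      ((((hd1 x).pow 2).sub_const β).mul (hdG x).cos).sub (((hd2 x).const_mul √2).mul (hdG x).sin)
    intro x hx
    rw [constant_of_has_deriv_right_zero (fun x _ => (hd x).continuousAt.continuousWithinAt)
      (fun x hx => ?_) x hx]
    · simp [hG0, hf0]
    · convert (hd x).hasDerivWithinAt using 1
      rw [hode x ⟨hx.1, hx.2.le⟩]
      simp only [Pi.pow_apply]
      push_cast
      linear_combination (deriv f x * f x * cos (G x)) * h22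
  have hB : ∀ x ∈ Set.Icc (-T) T,
      (f x ^ 2 - β) * sin (G x) + √2 * deriv f x * cos (G x) = √2 * m := by
    have hd : ∀ x, HasDerivAt
        (fun x => (f x ^ 2 - β) * sin (G x) + √2 * deriv f x * cos (G x)) _ x := fun x =>
      ((((hd1 x).pow 2).sub_const β).mul (hdG x).sin).add (((hd2 x).const_mul √2).mul (hdG x).cos)
    intro x hx
    rw [constant_of_has_deriv_right_zero (fun x _ => (hd x).continuousAt.continuousWithinAt)
      (fun x hx => ?_) x hx]
    · simp [hG0, hf0, hf'0]
    · convert (hd x).hasDerivWithinAt using 1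
      rw [hode x ⟨hx.1, hx.2.le⟩]
      simp only [Pi.pow_apply]
      push_cast
      linear_combination (deriv f x * f x * sin (G x)) * h22
  change _ = -β * cos (G t) + √2 * m * sin (G t)
  linear_combination cos (G t) * hA t ht + sin (G t) * hB t ht
    - (f t ^ 2 - β) * Real.sin_sq_add_cos_sq (G t)

lemma duffing_integral_f (m : ℕ) (hm : 0 < m) (β T : ℝ) (f : ℝ → ℝ)
    (h : IsDuffingSolution m β T f) :
    √2 * ∫ t in (-T)..T, f t = 4 * arcsin (duffingModulus m β) := by
  have hrot := duffing_rotation m β T f h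
  obtain ⟨hψ0, hψπ, hc, hs⟩ := duffing_angle m hm β
  obtain ⟨hT, hf, -, -, hfT, -, -, hpos⟩ := h
  have hfc : Continuous f := hf.continuous
  set ψ := 2 * arcsin (duffingModulus m β) with hψ
  set S := √(2 * (m : ℝ) ^ 2 + β ^ 2) with hS
  have hS0 : S ≠ 0 := by
    have hm' : (0 : ℝ) < m := by exact_mod_cast hm
    positivity
  set G : ℝ → ℝ := fun t => √2 * ∫ s in (-T)..t, f s with hG
  have hGc : Continuous G :=
    continuous_const.mul (intervalIntegral.continuous_primitive
      (fun a b => hfc.intervalIntegrable a b) _)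
  have hG0 : G (-T) = 0 := by simp [hG]
  have hGT : 0 < G T := mul_pos (by positivity)
    (intervalIntegral.intervalIntegral_pos_of_pos_on (hfc.intervalIntegrable _ _) hpos
      (by linarith))
  have hcos : ∀ t ∈ Set.Icc (-T) T, f t ^ 2 = S * cos (ψ - G t) - S * cos ψ := by
    intro t ht
    have h1 : f t ^ 2 - β = -β * cos (G t) + √2 * m * sin (G t) := hrot t ht
    rw [Real.cos_sub]
    linear_combination h1 - cos (G t) * hc - sin (G t) * hs + hc
  -- If `G` passed `2ψ` in the interior, `f` would vanish there.
  have hle : G T ≤ 2 * ψ := by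
    by_contra! hlt
    obtain ⟨t, ht, hGt⟩ := intermediate_value_Ioo (by linarith : -T ≤ T) hGc.continuousOn
      (⟨by rw [hG0]; linarith, hlt⟩ : 2 * ψ ∈ Set.Ioo (G (-T)) (G T))
    have h1 := hcos t (Set.Ioo_subset_Icc_self ht)
    rw [hGt, show ψ - 2 * ψ = -ψ by ring, Real.cos_neg, sub_self] at h1
    exact (pow_pos (hpos t ht) 2).ne' h1
  have h1 := hcos T ⟨by linarith, le_rfl⟩
  rw [hfT] at h1
  have h2 : cos |ψ - G T| = cos ψ := by
    rw [Real.cos_abs]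
    apply mul_left_cancel₀ hS0
    linarith
  have habs : |ψ - G T| ≤ ψ := abs_le.2 ⟨by linarith, by linarith⟩
  have h3 := Real.injOn_cos ⟨abs_nonneg _, habs.trans hψπ⟩ ⟨hψ0.le, hψπ⟩ h2
  change G T = _
  rcases abs_cases (ψ - G T) with h4 | h4 <;> linarith

/-- `∫_{-T}^{T} f³ = 2√2 · β · arcsin k + 2m`. -/
theorem duffing_integral_f_cubed (m : ℕ) (hm : 0 < m) (β T : ℝ) (f : ℝ → ℝ)
    (h : IsDuffingSolution m β T f) :
    (∫ t in (-T)..T, (f t) ^ 3)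
      = 2 * Real.sqrt 2 * β * Real.arcsin (duffingModulus m β) + 2 * (m : ℝ) := by
  have hint := duffing_integral_f m hm β T f h
  obtain ⟨hT, hf, hode, -, -, hf'0, hf'T, -⟩ := h
  have hfc : Continuous f := hf.continuous
  have hf' : ContDiff ℝ 1 (deriv f) :=
    ContDiff.deriv' (n := 1) (by simpa [one_add_one_eq_two] using contDiff_infty.1 hf 2)
  have hc2 : Continuous (deriv (deriv f)) := hf'.continuous_deriv le_rfl
  have h1 : ∫ t in (-T)..T, deriv (deriv f) t = -(m : ℝ) - m := by
    rw [intervalIntegral.integral_deriv_eq_sub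
      (fun x _ => (hf'.differentiable (by simp)) x) (hc2.intervalIntegrable _ _), hf'0, hf'T]
  have h2 : ∫ t in (-T)..T, f t ^ 3 = ∫ t in (-T)..T, (β * f t - deriv (deriv f) t) := by
    apply intervalIntegral.integral_congr
    intro t ht
    rw [Set.uIcc_of_le (by linarith)] at ht
    simp only [hode t ht]
    ring
  rw [h2, intervalIntegral.integral_sub ((hfc.const_mul β).intervalIntegrable _ _)
    (hc2.intervalIntegrable _ _), intervalIntegral.integral_const_mul, h1]
  have h22 : √2 * √2 = (2 : ℝ) := Real.mul_self_sqrt (by norm_num)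
  linear_combination (β * √2 / 2) * hint - (β * (∫ t in (-T)..T, f t) / 2) * h22
end

section
/- Let f be a C^∞ positive function on an open interval I such that the set {t ∈ I : f'(t) ≠ 0} is dense in I. If B₄[f] vanishes identically on I, then B₁[f], B₂[f], and B₃[f] also vanish identically on I. -/
/-!
Writing `ρ_i' = ρ_{i+1} - ρ₁ ρ_i`, a direct computation gives the Bianchi-type identity
`B₄' = ρ₁ (B₃ - B₄)` (`hasDerivAt_B4`). If `B₄ ≡ 0` then `ρ₁ B₃ = 0`, so `B₃` vanishes wherever
`f' ≠ 0`; that set is dense and `B₃` is continuous (`continuousAt_B3`), so `B₃ ≡ 0`. Finally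
`B₁ = B₂` and the trace-free identity `B₁ + B₂ + B₃ + B₄ = 0` give the vanishing of `B₁`, `B₂`.
-/

open Real

/-- `ρ_i = f⁽ⁱ⁾/f`, the ratio of the `i`-th derivative of `f` to `f`. -/
noncomputable def rho (f : ℝ → ℝ) (i : ℕ) (t : ℝ) : ℝ := iteratedDeriv i f t / f t

/-- The component `B₁ = B₂` of the Bach tensor of the cohomogeneity-one metric `g(f)`. -/
noncomputable def B1 (f : ℝ → ℝ) (t : ℝ) : ℝ :=
  (-(rho f 4 t) + rho f 1 t * rho f 3 t + 2 * (rho f 2 t) ^ 2 - (rho f 1 t) ^ 2 * rho f 2 t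
    + 20 * (f t) ^ 2 * rho f 2 t + 20 * (f t) ^ 2 * (rho f 1 t) ^ 2
    - 48 * (f t) ^ 4 + 64 * (f t) ^ 2 - 11) / 6

/-- The component `B₂` of the Bach tensor of the cohomogeneity-one metric `g(f)`. -/
noncomputable def B2 (f : ℝ → ℝ) (t : ℝ) : ℝ :=
  (-(rho f 4 t) + rho f 1 t * rho f 3 t + 2 * (rho f 2 t) ^ 2 - (rho f 1 t) ^ 2 * rho f 2 t
    + 20 * (f t) ^ 2 * rho f 2 t + 20 * (f t) ^ 2 * (rho f 1 t) ^ 2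
    - 48 * (f t) ^ 4 + 64 * (f t) ^ 2 - 11) / 6

/-- The component `B₃` of the Bach tensor of the cohomogeneity-one metric `g(f)`. -/
noncomputable def B3 (f : ℝ → ℝ) (t : ℝ) : ℝ :=
  (2 * rho f 4 t - 4 * rho f 1 t * rho f 3 t - 3 * (rho f 2 t) ^ 2
    + 4 * (rho f 1 t) ^ 2 * rho f 2 t - 40 * (f t) ^ 2 * rho f 2 t
    - 20 * (f t) ^ 2 * (rho f 1 t) ^ 2 + 80 * (f t) ^ 4 - 96 * (f t) ^ 2 + 11) / 6

/-- The component `B₄` of the Bach tensor of the cohomogeneity-one metric `g(f)`. -/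
noncomputable def B4 (f : ℝ → ℝ) (t : ℝ) : ℝ :=
  (2 * rho f 1 t * rho f 3 t - (rho f 2 t) ^ 2 - 2 * (rho f 1 t) ^ 2 * rho f 2 t
    - 20 * (f t) ^ 2 * (rho f 1 t) ^ 2 + 16 * (f t) ^ 4 - 32 * (f t) ^ 2 + 11) / 6

lemma hasDerivAt_rho {f : ℝ → ℝ} (hf : ContDiff ℝ (⊤ : ℕ∞) f) (i : ℕ) {t : ℝ} (ht : f t ≠ 0) :
    HasDerivAt (rho f i) (rho f (i + 1) t - rho f 1 t * rho f i t) t := by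
  have h1 : HasDerivAt (iteratedDeriv i f) (iteratedDeriv (i + 1) f t) t := by
    rw [iteratedDeriv_succ]
    exact (hf.differentiable_iteratedDeriv i (by exact_mod_cast ENat.natCast_lt_top i)
      ).differentiableAt.hasDerivAt
  have h0 : HasDerivAt f (iteratedDeriv 1 f t) t := by
    rw [iteratedDeriv_one]
    exact (hf.differentiable (by simp)).differentiableAt.hasDerivAt
  refine (h1.div h0 ht).congr_deriv ?_
  simp only [rho]
  field_simp

lemma hasDerivAt_B4 {f : ℝ → ℝ} (hf : ContDiff ℝ (⊤ : ℕ∞) f) {t : ℝ} (ht : f t ≠ 0) :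
    HasDerivAt (B4 f) (rho f 1 t * (B3 f t - B4 f t)) t := by
  have h0 : HasDerivAt f (f t * rho f 1 t) t := by
    have h : f t * rho f 1 t = deriv f t := by
      simp only [rho, iteratedDeriv_one]
      field_simp
    rw [h]
    exact (hf.differentiable (by simp)).differentiableAt.hasDerivAt
  have h1 := hasDerivAt_rho hf 1 ht
  have h2 := hasDerivAt_rho hf 2 ht
  have h3 := hasDerivAt_rho hf 3 ht
  have H := ((((((((h1.const_mul 2).mul h3).sub (h2.pow 2)).sub
    (((h1.pow 2).const_mul 2).mul h2)).sub
    (((h0.pow 2).const_mul 20).mul (h1.pow 2))).add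
    ((h0.pow 4).const_mul 16)).sub ((h0.pow 2).const_mul 32)).add_const 11).div_const 6
  refine H.congr_deriv ?_
  simp only [B3, B4, Pi.pow_apply]
  norm_num
  ring

lemma continuousAt_B3 {f : ℝ → ℝ} (hf : ContDiff ℝ (⊤ : ℕ∞) f) {t : ℝ} (ht : f t ≠ 0) :
    ContinuousAt (B3 f) t := by
  have h0 : ContinuousAt f t := hf.continuous.continuousAt
  have h1 := (hasDerivAt_rho hf 1 ht).continuousAt
  have h2 := (hasDerivAt_rho hf 2 ht).continuousAt
  have h3 := (hasDerivAt_rho hf 3 ht).continuousAt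
  have h4 := (hasDerivAt_rho hf 4 ht).continuousAt
  unfold B3
  fun_prop

/-- If the regular set of `f` is dense and `B₄[f] ≡ 0`, then `B₁, B₂, B₃` all vanish. -/
theorem bach_flat_from_B4 (a b : ℝ) (f : ℝ → ℝ)
    (hf : ContDiff ℝ (⊤ : ℕ∞) f) (hpos : ∀ t ∈ Set.Ioo a b, 0 < f t)
    (hdense : ∀ t ∈ Set.Ioo a b,
      t ∈ closure {s | s ∈ Set.Ioo a b ∧ deriv f s ≠ 0})
    (hB4 : ∀ t ∈ Set.Ioo a b, B4 f t = 0) :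
    ∀ t ∈ Set.Ioo a b, B1 f t = 0 ∧ B2 f t = 0 ∧ B3 f t = 0 := by
  have key : ∀ s ∈ Set.Ioo a b, deriv f s ≠ 0 → B3 f s = 0 := by
    intro s hs hd
    have hs0 := (hpos s hs).ne'
    have hzero : HasDerivAt (B4 f) 0 s := by
      refine (hasDerivAt_const s (0 : ℝ)).congr_of_eventuallyEq ?_
      filter_upwards [isOpen_Ioo.mem_nhds hs] with x hx using hB4 x hx
    have h := (hasDerivAt_B4 hf hs0).unique hzero
    rw [hB4 s hs, sub_zero] at h
    refine (mul_eq_zero.mp h).resolve_left ?_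
    simpa [rho, iteratedDeriv_one] using ⟨hd, hs0⟩
  intro t ht
  have h3 : B3 f t = 0 := by
    have hmem := (continuousAt_B3 hf (hpos t ht).ne').continuousWithinAt.mem_closure
      (hdense t ht) (t := {0}) (fun s hs => key s hs.1 hs.2)
    simpa using hmem
  have h1 : B1 f t = 0 := by
    have h : B1 f t = -(B3 f t + B4 f t) / 2 := by
      simp only [B1, B3, B4]
      ring
    rw [h, h3, hB4 t ht]
    norm_num
  -- `B1` and `B2` are given by the same formula.
  exact ⟨h1, h1, h3⟩
end
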